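/- arXiv:1401.3026 — 2 statements merged into one kernel-verified Lean document; each statement's English description precedes it below -/
import Mathlib

section
/- Let n ≥ 1, let M₁, …, M_N ∈ ℝ^{n×n}, let p₁, …, p_N be positive reals summing to 1, and let μ = p₁ δ_{M₁} + ⋯ + p_N δ_{M_N}. Let A be a random matrix with law μ and let M = {M₁, …, M_N}. Then ρ̂(M) = limsup_{p→∞} ρ(E[A^{⊗p}])^{1/p}, where the limit superior is over positive integers p. -/
open MeasureTheory Filter Topology
open scoped ENNReal RealInnerProductSpace

noncomputable section

/-- The space of real `n × n` matrices. -/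
abbrev Mat (n : ℕ) := Matrix (Fin n) (Fin n) ℝ

/-- Euclidean space `ℝⁿ`. -/
abbrev EucSp (n : ℕ) := EuclideanSpace ℝ (Fin n)

/-- The (Borel = product) measurable structure on `n × n` real matrices. -/
instance matMeasurableSpace (n : ℕ) : MeasurableSpace (Mat n) :=
  inferInstanceAs (MeasurableSpace (Fin n → Fin n → ℝ))

/-- Lebesgue measure on the space of `n × n` real matrices `≅ ℝ^{n²}`. -/
def matLebesgue (n : ℕ) : Measure (Mat n) :=
  (inferInstance : MeasureSpace (Fin n → Fin n → ℝ)).volume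

/-- The operator norm (maximal singular value) of a real square matrix, induced by the
Euclidean norm. -/
def opNorm {m : ℕ} (A : Matrix (Fin m) (Fin m) ℝ) : ℝ :=
  ‖LinearMap.toContinuousLinearMap (Matrix.toEuclideanLin A)‖

/-- The product `A_k ⋯ A_1` of the matrices `f 0 = A_1, …, f (k-1) = A_k` (decreasing order of
indices). -/
def prodRev {m k : ℕ} (f : Fin k → Matrix (Fin m) (Fin m) ℝ) : Matrix (Fin m) (Fin m) ℝ :=
  ((List.ofFn f).reverse).prod

/-- The joint spectral radius of a set of matrices:
`ρ̂(M) = limsup_{k→∞} sup_{A₁,…,A_k ∈ M} ‖A_k ⋯ A₁‖^(1/k)`. -/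
def jsr {m : ℕ} (M : Set (Matrix (Fin m) (Fin m) ℝ)) : ℝ :=
  limsup (fun k : ℕ =>
    sSup {x : ℝ | ∃ f : Fin k → Matrix (Fin m) (Fin m) ℝ,
      (∀ i, f i ∈ M) ∧ x = opNorm (prodRev f)} ^ ((1 : ℝ) / k)) atTop

/-- `E[‖A_k ⋯ A₁‖^p]` where `A₁, …, A_k` are i.i.d. with law `μ`. -/
def kExpNorm {m : ℕ} (μ : Measure (Mat m)) (p k : ℕ) : ℝ :=
  ∫ f : Fin k → Mat m, opNorm (prodRev f) ^ p ∂(Measure.pi fun _ => μ)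

/-- The `L^p`-norm joint spectral radius (`p`-radius) of a probability distribution `μ`:
`ρ_{p,μ} = lim_{k→∞} (E[‖A_k ⋯ A₁‖^p])^{1/(pk)}`; since this limit exists for distributions
with bounded support, it coincides with the `limsup` used here. -/
def pRadius {m : ℕ} (μ : Measure (Mat m)) (p : ℕ) : ℝ :=
  limsup (fun k : ℕ => kExpNorm μ p k ^ (1 / (p * k : ℝ))) atTop

/-- The (topological) support of a measure on matrices. -/
def msupport {m : ℕ} (μ : Measure (Mat m)) : Set (Mat m) :=
  {A | ∀ ε : ℝ, 0 < ε → μ {B | opNorm (B - A) < ε} ≠ 0}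

/-- `μ` has bounded support. -/
def HasBoundedSupport {m : ℕ} (μ : Measure (Mat m)) : Prop :=
  ∃ C : ℝ, ∀ A ∈ msupport μ, opNorm A ≤ C

/-- A proper cone of `ℝⁿ`: a closed convex pointed cone with nonempty interior. -/
structure IsProperCone {m : ℕ} (K : Set (EucSp m)) : Prop where
  isClosed : IsClosed K
  convex : Convex ℝ K
  smul_mem : ∀ c : ℝ, 0 ≤ c → ∀ x ∈ K, c • x ∈ K
  pointed : ∀ x ∈ K, -x ∈ K → x = 0
  solid : (interior K).Nonempty

/-- A matrix `A` leaves a cone `K` invariant: `A K ⊆ K`. -/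
def LeavesInv {m : ℕ} (A : Matrix (Fin m) (Fin m) ℝ) (K : Set (EucSp m)) : Prop :=
  ∀ x ∈ K, Matrix.toEuclideanLin A x ∈ K

/-- A set of matrices leaves a cone invariant if each of its members does. -/
def SetLeavesInv {m : ℕ} (S : Set (Matrix (Fin m) (Fin m) ℝ)) (K : Set (EucSp m)) : Prop :=
  ∀ A ∈ S, LeavesInv A K

/-- `π(K)`: the set of matrices leaving the cone `K` invariant. -/
def piCone {m : ℕ} (K : Set (EucSp m)) : Set (Mat m) := {A | LeavesInv A K}

/-- Distance (valued in `ℝ≥0∞`, with `d(A, ∅) = ∞`) from a matrix to a set of matrices, in the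
operator norm. -/
def edistSet {m : ℕ} (A : Mat m) (S : Set (Mat m)) : ℝ≥0∞ :=
  ⨅ B ∈ S, ENNReal.ofReal (opNorm (A - B))

/-- Hausdorff distance between two sets of matrices (operator norm, valued in `ℝ≥0∞`). -/
def hausdorffDistE {m : ℕ} (S T : Set (Mat m)) : ℝ≥0∞ :=
  max (⨆ A ∈ S, edistSet A T) (⨆ B ∈ T, edistSet B S)

/-- `S_M = {A : A − M leaves K invariant}`, i.e. `{A : A ≥^K M}`. -/
def matSSet {m : ℕ} (K : Set (EucSp m)) (M : Mat m) : Set (Mat m) :=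
  {A | LeavesInv (A - M) K}

/-- `π_r = {M ∈ π(K) : d(M, ∂π(K)) ≥ r}`. -/
def piConeR {m : ℕ} (K : Set (EucSp m)) (r : ℝ) : Set (Mat m) :=
  {M | M ∈ piCone K ∧ ENNReal.ofReal r ≤ edistSet M (frontier (piCone K))}

/-- `M_r = (π_r ∩ supp μ_c) ∪ supp μ_s`. -/
def MrSet {m : ℕ} (K : Set (EucSp m)) (μc μs : Measure (Mat m)) (r : ℝ) : Set (Mat m) :=
  (piConeR K r ∩ msupport μc) ∪ msupport μs

/-- The measure `ν` is zero or a finite linear combination (with positive coefficients) of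
Dirac measures. -/
def IsFiniteDiracComb {m : ℕ} (ν : Measure (Mat m)) : Prop :=
  ν = 0 ∨ ∃ (N : ℕ) (w : Fin N → ℝ) (Ms : Fin N → Mat m),
    (∀ i, 0 < w i) ∧ ν = ∑ i, ENNReal.ofReal (w i) • Measure.dirac (Ms i)

/-- The `p`-th Kronecker power of a square matrix (with `A^{⊗0} = 1`, `A^{⊗(p+1)} = A^{⊗p} ⊗ A`). -/
def kronPow {m : ℕ} (A : Matrix (Fin m) (Fin m) ℝ) :
    (p : ℕ) → Matrix (Fin (m ^ p)) (Fin (m ^ p)) ℝ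
  | 0 => 1
  | p + 1 =>
    Matrix.reindex (finProdFinEquiv.trans (finCongr (pow_succ m p).symm))
      (finProdFinEquiv.trans (finCongr (pow_succ m p).symm))
      (Matrix.kroneckerMap (· * ·) (kronPow A p) A)

/-- The `q`-th Kronecker power of a vector. -/
def vecKronPow {m : ℕ} (x : EucSp m) : (q : ℕ) → EucSp (m ^ q)
  | 0 => WithLp.toLp 2 fun _ => 1
  | q + 1 => WithLp.toLp 2 fun i =>
      vecKronPow x q (finProdFinEquiv.symm (finCongr (pow_succ m q) i)).1 *
        x (finProdFinEquiv.symm (finCongr (pow_succ m q) i)).2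

/-- The spectral radius of a real square matrix: the largest modulus of a complex eigenvalue. -/
def specRad {m : ℕ} (A : Matrix (Fin m) (Fin m) ℝ) : ℝ :=
  sSup ((norm : ℂ → ℝ) '' spectrum ℂ (A.map Complex.ofReal))

/-- The entrywise expectation `E[A^{⊗p}]` of the `p`-th Kronecker power under `μ`. -/
def kronExp {m : ℕ} (μ : Measure (Mat m)) (p : ℕ) :
    Matrix (Fin (m ^ p)) (Fin (m ^ p)) ℝ :=
  Matrix.of fun i j => ∫ A, kronPow A p i j ∂μ

/-- `V` is a stochastic Lyapunov function for `μ` of degree `p` with growth rate `γ`. -/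
def IsStochLyap {m : ℕ} (μ : Measure (Mat m)) (p : ℕ) (γ : ℝ) (V : EucSp m → ℝ) : Prop :=
  (∃ C₁ : ℝ, 0 < C₁ ∧ ∃ C₂ : ℝ, 0 < C₂ ∧
    ∀ x : EucSp m, C₁ * ‖x‖ ^ p ≤ V x ∧ V x ≤ C₂ * ‖x‖ ^ p) ∧
  ∀ x : EucSp m, (∫ A, V (Matrix.toEuclideanLin A x) ∂μ) ≤ γ ^ p * V x

/-- `ν` is a norm on `ℝ^m`. -/
def IsNormFn {m : ℕ} (ν : EucSp m → ℝ) : Prop :=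
  (∀ x, 0 ≤ ν x) ∧ (∀ x, ν x = 0 ↔ x = 0) ∧
  (∀ (a : ℝ) (x : EucSp m), ν (a • x) = |a| * ν x) ∧
  (∀ x y : EucSp m, ν (x + y) ≤ ν x + ν y)

/-- `ν` is cone absolute with respect to `K`:
`ν x = inf {ν (v + w) : v, w ∈ K, x = v − w}`. -/
def IsConeAbsolute {m : ℕ} (K : Set (EucSp m)) (ν : EucSp m → ℝ) : Prop :=
  ∀ x : EucSp m, ν x = sInf {r : ℝ | ∃ v ∈ K, ∃ w ∈ K, x = v - w ∧ r = ν (v + w)}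

/-- The dual cone `K* = {f : fᵀx ≥ 0 for all x ∈ K}`. -/
def dualConeSet {m : ℕ} (K : Set (EucSp m)) : Set (EucSp m) :=
  {f | ∀ x ∈ K, 0 ≤ ⟪f, x⟫}

/-- `ν` is cone linear with respect to `K`: `ν = ⟪f, ·⟫` on `K` for some `f ∈ K*`. -/
def IsConeLinear {m : ℕ} (K : Set (EucSp m)) (ν : EucSp m → ℝ) : Prop :=
  ∃ f ∈ dualConeSet K, ∀ x ∈ K, ν x = ⟪f, x⟫

/-- The matrix norm induced by a norm `ν` on `ℝ^m`. -/
def inducedNormFn {m : ℕ} (ν : EucSp m → ℝ) (A : Matrix (Fin m) (Fin m) ℝ) : ℝ :=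
  sSup {c : ℝ | ∃ x : EucSp m, x ≠ 0 ∧ c = ν (Matrix.toEuclideanLin A x) / ν x}

/-! ### Entries and the operator norm -/

theorem abs_entry_le_opNorm {m : ℕ} (A : Mat m) (i j : Fin m) : |A i j| ≤ opNorm A := by
  have h := (LinearMap.toContinuousLinearMap (Matrix.toEuclideanLin A)).le_opNorm
    (EuclideanSpace.single j 1)
  have h' := PiLp.norm_apply_le (Matrix.toEuclideanLin A (EuclideanSpace.single j (1 : ℝ))) i
  simp at h h'
  exact h'.trans h

theorem opNorm_nonneg {m : ℕ} (A : Mat m) : 0 ≤ opNorm A := norm_nonneg _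

theorem opNorm_mul_le {m : ℕ} (A B : Mat m) : opNorm (A * B) ≤ opNorm A * opNorm B :=
  open scoped Matrix.Norms.L2Operator in Matrix.l2_opNorm_mul A B

theorem opNorm_one_le {m : ℕ} : opNorm (1 : Mat m) ≤ 1 := by
  refine ContinuousLinearMap.opNorm_le_bound _ zero_le_one fun x => ?_
  simp

/-- The operator norm is controlled by the largest entry in modulus. -/
theorem exists_opNorm_le_mul_entry (m : ℕ) [NeZero m] :
    ∃ C : ℝ, 0 < C ∧ ∀ A : Mat m, ∃ i j, opNorm A ≤ C * |A i j| := by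
  let L : (Fin m → Fin m → ℝ) →ₗ[ℝ] (EucSp m →L[ℝ] EucSp m) :=
    (LinearMap.toContinuousLinearMap (𝕜 := ℝ) (E := EucSp m) (F' := EucSp m)).toLinearMap ∘ₗ
      (Matrix.toEuclideanLin (𝕜 := ℝ) (m := Fin m) (n := Fin m)).toLinearMap ∘ₗ
      (Matrix.ofLinearEquiv ℝ).toLinearMap
  refine ⟨‖LinearMap.toContinuousLinearMap L‖ + 1, by positivity, fun A => ?_⟩
  obtain ⟨⟨i, j⟩, -, hij⟩ := Finset.exists_max_image (Finset.univ : Finset (Fin m × Fin m))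
    (fun q => |A q.1 q.2|) Finset.univ_nonempty
  refine ⟨i, j, ?_⟩
  have h : opNorm A ≤ ‖LinearMap.toContinuousLinearMap L‖ * ‖(fun a b => A a b)‖ :=
    (LinearMap.toContinuousLinearMap L).le_opNorm (fun a b => A a b)
  have h' : ‖(fun a b => A a b)‖ ≤ |A i j| :=
    (pi_norm_le_iff_of_nonneg (abs_nonneg _)).2 fun a =>
      (pi_norm_le_iff_of_nonneg (abs_nonneg _)).2 fun b => hij (a, b) (Finset.mem_univ _)
  calc opNorm A ≤ ‖LinearMap.toContinuousLinearMap L‖ * ‖(fun a b => A a b)‖ := h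
    _ ≤ (‖LinearMap.toContinuousLinearMap L‖ + 1) * |A i j| := by gcongr; linarith

/-! ### Spectral radius and growth of the entries of the powers -/

section Gelfand

attribute [local instance] Matrix.linftyOpNormedAddCommGroup Matrix.linftyOpNormedRing
  Matrix.linftyOpNormedAlgebra

theorem norm_entry_le_linftyOpNorm {m : ℕ} (A : Mat m) (i j : Fin m) : |A i j| ≤ ‖A‖ := by
  rw [Matrix.linfty_opNorm_def]
  have h1 : ‖A i j‖₊ ≤ ∑ j, ‖A i j‖₊ :=
    Finset.single_le_sum (f := fun j => ‖A i j‖₊) (fun _ _ => zero_le) (Finset.mem_univ j)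
  have h2 := h1.trans (Finset.le_sup (f := fun i => ∑ j, ‖A i j‖₊) (Finset.mem_univ i))
  exact_mod_cast h2

theorem linftyOpNorm_le_of_entry_le {m : ℕ} (A : Mat m) {t : ℝ} (ht : 0 ≤ t)
    (h : ∀ i j, |A i j| ≤ t) : ‖A‖ ≤ m * t := by
  lift t to NNReal using ht
  rw [Matrix.linfty_opNorm_def]
  have : (Finset.univ.sup fun i => ∑ j, ‖A i j‖₊) ≤ m * t := by
    refine Finset.sup_le fun i _ => ?_
    calc ∑ j, ‖A i j‖₊ ≤ ∑ _j : Fin m, t := Finset.sum_le_sum fun j _ => h i j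
      _ = m * t := by simp
  exact_mod_cast this

theorem specRad_nonneg {m : ℕ} (A : Mat m) : 0 ≤ specRad A :=
  Real.sSup_nonneg (by rintro _ ⟨z, -, rfl⟩; exact norm_nonneg z)

theorem ofReal_specRad {m : ℕ} [NeZero m] (A : Mat m) :
    ENNReal.ofReal (specRad A) = spectralRadius ℂ (A.map Complex.ofReal) := by
  obtain ⟨z, hz, hz'⟩ := spectrum.exists_nnnorm_eq_spectralRadius (A.map Complex.ofReal)
  have : specRad A = ‖z‖ := by
    refine IsGreatest.csSup_eq ⟨⟨z, hz, rfl⟩, ?_⟩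
    rintro _ ⟨y, hy, rfl⟩
    have : (‖y‖₊ : ℝ≥0∞) ≤ ‖z‖₊ := by
      rw [hz']
      exact le_iSup₂ (α := ℝ≥0∞) (f := fun k _ => (‖k‖₊ : ℝ≥0∞)) y hy
    exact_mod_cast this
  rw [this, ← hz']
  exact ofReal_norm z

theorem tendsto_norm_pow_specRad {m : ℕ} [NeZero m] (A : Mat m) :
    Tendsto (fun k : ℕ => ‖A ^ k‖ ^ ((1 : ℝ) / k)) atTop (𝓝 (specRad A)) := by
  have h := spectrum.pow_norm_pow_one_div_tendsto_nhds_spectralRadius (A.map Complex.ofReal)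
  rw [← ofReal_specRad] at h
  have h' := (ENNReal.tendsto_toReal ENNReal.ofReal_ne_top).comp h
  rw [ENNReal.toReal_ofReal (specRad_nonneg A)] at h'
  refine h'.congr fun k => ?_
  have hk : (A.map Complex.ofReal) ^ k = (A ^ k).map Complex.ofReal :=
    (map_pow (Complex.ofRealHom.mapMatrix) A k).symm
  rw [Function.comp_apply, ENNReal.toReal_ofReal (by positivity), hk]
  congr 1
  simp [Matrix.linfty_opNorm_def]

theorem tendsto_const_rpow_one_div {c : ℝ} (hc : 0 < c) :
    Tendsto (fun k : ℕ => c ^ ((1 : ℝ) / k)) atTop (𝓝 1) := by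
  simpa using (tendsto_const_nhds (x := c)).rpow (tendsto_one_div_atTop_nhds_zero_nat (𝕜 := ℝ))
    (Or.inl hc.ne')

theorem mul_pow_rpow_one_div {c r : ℝ} (hc : 0 ≤ c) (hr : 0 ≤ r) {k : ℕ} (hk : k ≠ 0) :
    (c * r ^ k) ^ ((1 : ℝ) / k) = c ^ ((1 : ℝ) / k) * r := by
  rw [Real.mul_rpow hc (by positivity), one_div, Real.pow_rpow_inv_natCast hr hk]

theorem specRad_le_of_eventually_entry_le {m : ℕ} [NeZero m] (A : Mat m) {r : ℝ} (hr : 0 ≤ r)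
    (h : ∀ᶠ k : ℕ in atTop, ∀ i j, |(A ^ k) i j| ≤ r ^ k) : specRad A ≤ r := by
  have hm : (0 : ℝ) < m := by exact_mod_cast NeZero.pos m
  have hlim : Tendsto (fun k : ℕ => (m : ℝ) ^ ((1 : ℝ) / k) * r) atTop (𝓝 r) := by
    simpa using (tendsto_const_rpow_one_div hm).mul_const r
  refine le_of_tendsto_of_tendsto (tendsto_norm_pow_specRad A) hlim ?_
  filter_upwards [h, eventually_ne_atTop 0] with k hk hk0
  rw [← mul_pow_rpow_one_div hm.le hr hk0]
  exact Real.rpow_le_rpow (norm_nonneg _)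
    (linftyOpNorm_le_of_entry_le _ (by positivity) hk) (by positivity)

theorem le_specRad_of_frequently_le_entry {m : ℕ} [NeZero m] (A : Mat m) {c r : ℝ} (hc : 0 < c)
    (hr : 0 ≤ r) (h : ∃ᶠ k : ℕ in atTop, ∃ i j, c * r ^ k ≤ |(A ^ k) i j|) : r ≤ specRad A := by
  have hlim : Tendsto (fun k : ℕ => c ^ ((1 : ℝ) / k) * r) atTop (𝓝 r) := by
    simpa using (tendsto_const_rpow_one_div hc).mul_const r
  refine le_of_tendsto_of_tendsto_of_frequently hlim (tendsto_norm_pow_specRad A) ?_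
  refine (h.and_eventually (eventually_ne_atTop 0)).mono ?_
  rintro k ⟨⟨i, j, hij⟩, hk0⟩
  rw [← mul_pow_rpow_one_div hc.le hr hk0]
  exact Real.rpow_le_rpow (by positivity) (hij.trans (norm_entry_le_linftyOpNorm _ i j))
    (by positivity)

end Gelfand

/-! ### Kronecker powers -/

theorem kronPow_one {m : ℕ} (p : ℕ) : kronPow (1 : Mat m) p = 1 := by
  induction p with
  | zero => rfl
  | succ p ih =>
    rw [kronPow, ih, Matrix.kroneckerMap_one_one _ (by simp) (by simp) (by simp),
      Matrix.reindex_apply, Matrix.submatrix_one_equiv]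

theorem kronPow_mul {m : ℕ} (A B : Mat m) (p : ℕ) :
    kronPow (A * B) p = kronPow A p * kronPow B p := by
  induction p with
  | zero => exact (one_mul _).symm
  | succ p ih =>
    simp only [kronPow, ih, Matrix.reindex_apply]
    rw [Matrix.submatrix_mul_equiv]
    exact congrArg (Matrix.submatrix · _ _) (Matrix.mul_kronecker_mul _ _ _ _)

theorem abs_kronPow_le {m : ℕ} (A : Mat m) {t : ℝ} (h : ∀ i j, |A i j| ≤ t) (p : ℕ)
    (i j : Fin (m ^ p)) : |kronPow A p i j| ≤ t ^ p := by
  induction p with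
  | zero =>
    rw [kronPow, Matrix.one_apply]
    split_ifs <;> simp
  | succ p ih =>
    simp only [kronPow, Matrix.reindex_apply, Matrix.submatrix_apply, Matrix.kroneckerMap_apply,
      abs_mul, pow_succ]
    refine mul_le_mul (ih _ _) (h _ _) (abs_nonneg _) (le_trans (abs_nonneg _) (ih ?_ ?_))
    exacts [(finProdFinEquiv.symm (finCongr (pow_succ m p) i)).1,
      (finProdFinEquiv.symm (finCongr (pow_succ m p) j)).1]

/-- Some entries of `A^{⊗p}` are the `p`-th powers of the entries of `A`. -/
theorem exists_kronPow_apply_eq_pow {m : ℕ} (p : ℕ) :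
    ∃ d : Fin m → Fin (m ^ p), ∀ (A : Mat m) (i j : Fin m),
      kronPow A p (d i) (d j) = A i j ^ p := by
  induction p with
  | zero => exact ⟨fun _ => ⟨0, by simp⟩, by simp [kronPow]⟩
  | succ p ih =>
    obtain ⟨d, hd⟩ := ih
    refine ⟨fun i => finProdFinEquiv.trans (finCongr (pow_succ m p).symm) (d i, i), ?_⟩
    intro A i j
    simp only [kronPow, Matrix.reindex_apply, Matrix.submatrix_apply, Matrix.kroneckerMap_apply,
      Equiv.symm_apply_apply, hd, pow_succ]

theorem kronExp_sum_dirac {n N : ℕ} (Ms : Fin N → Mat n) (w : Fin N → ℝ) (hw : ∀ i, 0 ≤ w i)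
    (p : ℕ) :
    kronExp (∑ i, ENNReal.ofReal (w i) • Measure.dirac (Ms i)) p
      = ∑ i, w i • kronPow (Ms i) p := by
  have : MeasurableSingletonClass (Mat n) :=
    inferInstanceAs (MeasurableSingletonClass (Fin n → Fin n → ℝ))
  ext a b
  rw [kronExp, Matrix.of_apply, integral_finsetSum_measure]
  · simp [Matrix.sum_apply, integral_smul_measure, integral_dirac, ENNReal.toReal_ofReal (hw _)]
  · intro i _
    exact (integrable_dirac (by simp)).smul_measure ENNReal.ofReal_ne_top

/-! ### Products along words -/

theorem prodRev_cons {m k : ℕ} (A : Mat m) (f : Fin k → Mat m) :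
    prodRev (Fin.cons A f : Fin (k + 1) → Mat m) = prodRev f * A := by
  simp [prodRev, List.ofFn_succ]

theorem sum_smul_kronPow_pow {n N : ℕ} (Ms : Fin N → Mat n) (w : Fin N → ℝ) (p k : ℕ) :
    (∑ i, w i • kronPow (Ms i) p) ^ k
      = ∑ f : Fin k → Fin N, (∏ i, w (f i)) • kronPow (prodRev (Ms ∘ f)) p := by
  induction k with
  | zero => simp [prodRev, kronPow_one]
  | succ k ih =>
    rw [pow_succ, ih, ← (Fin.consEquiv fun _ => Fin N).sum_comp, Fintype.sum_prod_type,
      Finset.sum_comm, Finset.sum_mul]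
    refine Finset.sum_congr rfl fun f _ => ?_
    rw [Finset.mul_sum]
    refine Finset.sum_congr rfl fun a _ => ?_
    have h : Ms ∘ (Fin.cons a f : Fin (k + 1) → Fin N) = Fin.cons (Ms a) (Ms ∘ f) := by
      funext i
      refine Fin.cases ?_ (fun i => ?_) i <;> simp
    simp [Fin.consEquiv, Fin.prod_univ_succ, h, prodRev_cons, kronPow_mul, smul_smul]

/-- The largest norm of a product of `k` of the matrices `Ms i`. -/
def wordNorm {n N : ℕ} (Ms : Fin N → Mat n) (k : ℕ) : ℝ :=
  ⨆ f : Fin k → Fin N, opNorm (prodRev (Ms ∘ f))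

theorem opNorm_prodRev_le_wordNorm {n N k : ℕ} (Ms : Fin N → Mat n) (f : Fin k → Fin N) :
    opNorm (prodRev (Ms ∘ f)) ≤ wordNorm Ms k :=
  le_ciSup (f := fun f : Fin k → Fin N => opNorm (prodRev (Ms ∘ f)))
    (Set.finite_range _).bddAbove f

theorem wordNorm_nonneg {n N : ℕ} (Ms : Fin N → Mat n) (k : ℕ) : 0 ≤ wordNorm Ms k :=
  Real.iSup_nonneg fun _ => opNorm_nonneg _

theorem exists_opNorm_eq_wordNorm {n N : ℕ} [NeZero N] (Ms : Fin N → Mat n) (k : ℕ) :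
    ∃ f : Fin k → Fin N, opNorm (prodRev (Ms ∘ f)) = wordNorm Ms k :=
  exists_eq_ciSup_of_finite (f := fun f : Fin k → Fin N => opNorm (prodRev (Ms ∘ f)))

theorem wordNorm_le_pow {n N : ℕ} (Ms : Fin N → Mat n) (k : ℕ) :
    wordNorm Ms k ≤ (∑ i, opNorm (Ms i)) ^ k := by
  have hC : 0 ≤ ∑ i, opNorm (Ms i) := Finset.sum_nonneg fun _ _ => opNorm_nonneg _
  refine Real.iSup_le (fun f => ?_) (by positivity)
  induction k with
  | zero => simpa [prodRev] using opNorm_one_le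
  | succ k ih =>
    have h : Ms ∘ f = Fin.cons (Ms (f 0)) (Ms ∘ Fin.tail f) := by
      funext i
      refine Fin.cases ?_ (fun i => ?_) i <;> simp [Fin.tail]
    rw [h, prodRev_cons, pow_succ]
    refine (opNorm_mul_le _ _).trans (mul_le_mul (ih _) ?_ (opNorm_nonneg _) (by positivity))
    exact Finset.single_le_sum (f := fun i => opNorm (Ms i)) (fun _ _ => opNorm_nonneg _)
      (Finset.mem_univ _)

theorem jsr_range {n N : ℕ} (Ms : Fin N → Mat n) :
    jsr (Set.range Ms) = limsup (fun k : ℕ => wordNorm Ms k ^ ((1 : ℝ) / k)) atTop := by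
  unfold jsr wordNorm iSup
  congr! 5 with k
  ext x
  constructor
  · rintro ⟨f, hf, rfl⟩
    choose g hg using hf
    exact ⟨g, by simp only [Function.comp_def, hg]⟩
  · rintro ⟨g, rfl⟩
    exact ⟨Ms ∘ g, fun i => ⟨g i, rfl⟩, rfl⟩

theorem rpow_one_div_wordNorm_le {n N : ℕ} (Ms : Fin N → Mat n) {k : ℕ} (hk : k ≠ 0) :
    wordNorm Ms k ^ ((1 : ℝ) / k) ≤ ∑ i, opNorm (Ms i) := by
  rw [one_div, Real.rpow_inv_le_iff_of_pos (wordNorm_nonneg _ _)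
    (Finset.sum_nonneg fun _ _ => opNorm_nonneg _) (by positivity), Real.rpow_natCast]
  exact wordNorm_le_pow Ms k

theorem isBoundedUnder_wordNorm {n N : ℕ} (Ms : Fin N → Mat n) :
    IsBoundedUnder (· ≤ ·) atTop (fun k : ℕ => wordNorm Ms k ^ ((1 : ℝ) / k)) :=
  isBoundedUnder_of_eventually_le <|
    (eventually_ne_atTop 0).mono fun _ hk => rpow_one_div_wordNorm_le Ms hk

theorem isCoboundedUnder_wordNorm {n N : ℕ} (Ms : Fin N → Mat n) :
    IsCoboundedUnder (· ≤ ·) atTop (fun k : ℕ => wordNorm Ms k ^ ((1 : ℝ) / k)) :=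
  (isBoundedUnder_of_eventually_ge (a := 0) <|
    .of_forall fun k => Real.rpow_nonneg (wordNorm_nonneg Ms k) _).isCoboundedUnder_le

theorem jsr_range_nonneg {n N : ℕ} (Ms : Fin N → Mat n) : 0 ≤ jsr (Set.range Ms) := by
  rw [jsr_range]
  exact le_limsup_of_frequently_le
    (.of_forall fun k => Real.rpow_nonneg (wordNorm_nonneg Ms k) _) (isBoundedUnder_wordNorm Ms)

theorem eventually_wordNorm_le_pow {n N : ℕ} (Ms : Fin N → Mat n) {r : ℝ}
    (hr : jsr (Set.range Ms) < r) : ∀ᶠ k in atTop, wordNorm Ms k ≤ r ^ k := by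
  have hr0 : 0 ≤ r := (jsr_range_nonneg Ms).trans hr.le
  rw [jsr_range] at hr
  filter_upwards [eventually_lt_of_limsup_lt hr (isBoundedUnder_wordNorm Ms),
    eventually_ne_atTop 0] with k hk hk0
  rw [one_div, Real.rpow_inv_lt_iff_of_pos (wordNorm_nonneg _ _) hr0 (by positivity),
    Real.rpow_natCast] at hk
  exact hk.le

theorem frequently_pow_le_wordNorm {n N : ℕ} (Ms : Fin N → Mat n) {r : ℝ} (hr0 : 0 ≤ r)
    (hr : r < jsr (Set.range Ms)) : ∃ᶠ k in atTop, r ^ k ≤ wordNorm Ms k := by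
  rw [jsr_range] at hr
  refine ((frequently_lt_of_lt_limsup (isCoboundedUnder_wordNorm Ms) hr).and_eventually
    (eventually_ne_atTop 0)).mono ?_
  rintro k ⟨hk, hk0⟩
  rw [one_div, Real.lt_rpow_inv_iff_of_pos hr0 (wordNorm_nonneg _ _) (by positivity),
    Real.rpow_natCast] at hk
  exact hk.le

/-! ### Comparison of the spectral radius of the mean Kronecker power with the joint one -/

theorem specRad_sum_smul_kronPow_le {n N : ℕ} [NeZero n] (Ms : Fin N → Mat n) (w : Fin N → ℝ)
    (hw : ∀ i, 0 ≤ w i) (hsum : ∑ i, w i = 1) (p : ℕ) {r : ℝ} (hr : jsr (Set.range Ms) < r) :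
    specRad (∑ i, w i • kronPow (Ms i) p) ≤ r ^ p := by
  have hr0 : 0 ≤ r := (jsr_range_nonneg Ms).trans hr.le
  refine specRad_le_of_eventually_entry_le _ (by positivity) ?_
  filter_upwards [eventually_wordNorm_le_pow Ms hr] with k hk i j
  have hW : ∑ f : Fin k → Fin N, ∏ i, w (f i) = 1 := by
    rw [← Fintype.piFinset_univ, Finset.sum_prod_piFinset]
    simp [hsum]
  rw [sum_smul_kronPow_pow, Matrix.sum_apply]
  calc |∑ f : Fin k → Fin N, ((∏ i, w (f i)) • kronPow (prodRev (Ms ∘ f)) p) i j|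
      ≤ ∑ f : Fin k → Fin N, |((∏ i, w (f i)) • kronPow (prodRev (Ms ∘ f)) p) i j| :=
        Finset.abs_sum_le_sum_abs _ _
    _ ≤ ∑ f : Fin k → Fin N, (∏ i, w (f i)) * (r ^ p) ^ k := by
        refine Finset.sum_le_sum fun f _ => ?_
        have hf : 0 ≤ ∏ i, w (f i) := Finset.prod_nonneg fun _ _ => hw _
        rw [Matrix.smul_apply, smul_eq_mul, abs_mul, abs_of_nonneg hf, pow_right_comm]
        refine mul_le_mul_of_nonneg_left (abs_kronPow_le _ (fun a b => ?_) p i j) hf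
        exact (abs_entry_le_opNorm _ a b).trans ((opNorm_prodRev_le_wordNorm Ms f).trans hk)
    _ = (r ^ p) ^ k := by rw [← Finset.sum_mul, hW, one_mul]

theorem mul_pow_le_specRad_sum_smul_kronPow {n N : ℕ} [NeZero n] [NeZero N] (Ms : Fin N → Mat n)
    (w : Fin N → ℝ) {c : ℝ} (hc : 0 ≤ c) (hw : ∀ i, c ≤ w i) {p : ℕ} (hp : Even p) {r : ℝ}
    (hr0 : 0 ≤ r) (hr : r < jsr (Set.range Ms)) :
    c * r ^ p ≤ specRad (∑ i, w i • kronPow (Ms i) p) := by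
  obtain ⟨C, hC, hCA⟩ := exists_opNorm_le_mul_entry n
  obtain ⟨d, hd⟩ := exists_kronPow_apply_eq_pow (m := n) p
  refine le_specRad_of_frequently_le_entry _ (c := (C⁻¹) ^ p) (by positivity) (by positivity) ?_
  refine (frequently_pow_le_wordNorm Ms hr0 hr).mono fun k hk => ?_
  obtain ⟨f, hf⟩ := exists_opNorm_eq_wordNorm Ms k
  obtain ⟨i, j, hij⟩ := hCA (prodRev (Ms ∘ f))
  refine ⟨d i, d j, ?_⟩
  have hP : C⁻¹ * r ^ k ≤ |prodRev (Ms ∘ f) i j| := by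
    rw [inv_mul_le_iff₀ hC]
    exact (hk.trans hf.ge).trans hij
  rw [sum_smul_kronPow_pow, Matrix.sum_apply]
  refine le_trans ?_ (le_abs_self _)
  calc (C⁻¹) ^ p * (c * r ^ p) ^ k = c ^ k * (C⁻¹ * r ^ k) ^ p := by
        rw [mul_pow, mul_pow, pow_right_comm r p k]; ring
    _ ≤ (∏ i, w (f i)) * |prodRev (Ms ∘ f) i j| ^ p := by
        have : c ^ k ≤ ∏ i, w (f i) := by
          simpa using Finset.prod_le_prod (s := Finset.univ) (f := fun _ : Fin k => c)
            (g := fun i => w (f i)) (fun _ _ => hc) (fun i _ => hw (f i))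
        exact mul_le_mul this (pow_le_pow_left₀ (by positivity) hP p) (by positivity)
          (le_trans (by positivity) this)
    _ = ((∏ i, w (f i)) • kronPow (prodRev (Ms ∘ f)) p) (d i) (d j) := by
        rw [Matrix.smul_apply, hd, hp.pow_abs, smul_eq_mul]
    _ ≤ _ := by
        refine Finset.single_le_sum (f := fun f : Fin k → Fin N =>
          ((∏ i, w (f i)) • kronPow (prodRev (Ms ∘ f)) p) (d i) (d j)) (fun g _ => ?_)
          (Finset.mem_univ f)
        rw [Matrix.smul_apply, hd]
        exact smul_nonneg (Finset.prod_nonneg fun _ _ => hc.trans (hw _)) (hp.pow_nonneg _)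

/-- For a finitely supported probability measure `μ = Σ pᵢ δ_{Mᵢ}` (positive
weights summing to 1), `ρ̂({M₁,…,M_N}) = limsup_{p→∞} ρ(E[A^{⊗p}])^{1/p}`. -/
theorem stmt3 (n N : ℕ) (hn : 1 ≤ n) (Ms : Fin N → Mat n) (w : Fin N → ℝ)
    (hw : ∀ i, 0 < w i) (hsum : ∑ i, w i = 1)
    (μ : Measure (Mat n)) (hμ : μ = ∑ i, ENNReal.ofReal (w i) • Measure.dirac (Ms i)) :
    jsr (Set.range Ms) = limsup (fun p : ℕ => specRad (kronExp μ p) ^ ((1 : ℝ) / p)) atTop := by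
  have : NeZero n := ⟨by omega⟩
  have : NeZero N := ⟨by rintro rfl; simp at hsum⟩
  obtain ⟨i₀, hi₀⟩ := Finite.exists_min w
  subst hμ
  simp only [kronExp_sum_dirac Ms w fun i => (hw i).le]
  set u : ℕ → ℝ := fun p => specRad (∑ i, w i • kronPow (Ms i) p) ^ ((1 : ℝ) / p)
  have hu0 : ∀ p, 0 ≤ u p := fun p => Real.rpow_nonneg (specRad_nonneg _) _
  have hub : ∀ r, jsr (Set.range Ms) < r → ∀ᶠ p in atTop, u p ≤ r := by
    intro r hr
    have hr0 : 0 ≤ r := (jsr_range_nonneg Ms).trans hr.le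
    filter_upwards [eventually_ne_atTop 0] with p hp
    rw [← Real.pow_rpow_inv_natCast hr0 hp, ← one_div]
    exact Real.rpow_le_rpow (specRad_nonneg _)
      (specRad_sum_smul_kronPow_le Ms w (fun i => (hw i).le) hsum p hr) (by positivity)
  have hbdd : IsBoundedUnder (· ≤ ·) atTop u :=
    isBoundedUnder_of_eventually_le (hub _ (lt_add_one _))
  have hcobdd : IsCoboundedUnder (· ≤ ·) atTop u :=
    (isBoundedUnder_of_eventually_ge (.of_forall hu0)).isCoboundedUnder_le
  refine le_antisymm (le_of_forall_lt_imp_le_of_dense fun r hr => ?_)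
    (le_of_forall_gt_imp_ge_of_dense fun r hr => limsup_le_of_le hcobdd (hub r hr))
  refine le_limsup_of_frequently_le ?_ hbdd
  rcases lt_or_ge r 0 with hneg | hr0
  · exact .of_forall fun p => hneg.le.trans (hu0 p)
  obtain ⟨s, hrs, hs⟩ := exists_between hr
  have hs0 : 0 ≤ s := hr0.trans hrs.le
  have hlim : Tendsto (fun p : ℕ => w i₀ ^ ((1 : ℝ) / p) * s) atTop (𝓝 s) := by
    simpa using (tendsto_const_rpow_one_div (hw i₀)).mul_const s
  have heven : ∃ᶠ p : ℕ in atTop, Even p :=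
    frequently_atTop.2 fun a => ⟨2 * a, by omega, even_two_mul a⟩
  refine (heven.and_eventually ((hlim.eventually_const_le hrs).and
    (eventually_ne_atTop 0))).mono ?_
  rintro p ⟨hp, hrp, hp0⟩
  refine hrp.trans ?_
  rw [← mul_pow_rpow_one_div (hw i₀).le hs0 hp0]
  exact Real.rpow_le_rpow (mul_nonneg (hw i₀).le (by positivity))
    (mul_pow_le_specRad_sum_smul_kronPow Ms w (hw i₀).le hi₀ hp hs0 hs) (by positivity)

end
end

section
/- Let n ≥ 1, let K ⊆ ℝⁿ be a proper cone, and let ‖·‖ be a cone linear absolute norm on ℝⁿ with respect to K, with induced matrix norm ‖A‖ := sup_{x ≠ 0} ‖Ax‖/‖x‖. Suppose A₁, …, A_k, B₁, …, B_k ∈ ℝ^{n×n} satisfy, for every i = 1, …, k, that B_i leaves K invariant and A_i − B_i leaves K invariant (i.e. A_i ≥^K B_i ≥^K 0). Then ‖A_k ⋯ A₁‖ ≥ ‖B_k ⋯ B₁‖. -/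
open MeasureTheory Filter Topology
open scoped ENNReal RealInnerProductSpace

noncomputable section

/-- A linear endomorphism of a finite-dimensional real space is bounded for any function
satisfying the norm axioms. -/
theorem exists_bound_of_norm_axioms {V : Type*} [AddCommGroup V] [Module ℝ V]
    [FiniteDimensional ℝ V] (ν : V → ℝ) (nonneg : ∀ x, 0 ≤ ν x) (eq_zero : ∀ x, ν x = 0 ↔ x = 0)
    (smul : ∀ (a : ℝ) (x : V), ν (a • x) = |a| * ν x) (add_le : ∀ x y, ν (x + y) ≤ ν x + ν y)
    (L : V →ₗ[ℝ] V) : ∃ C, ∀ x, ν (L x) ≤ C * ν x := by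
  let : Norm V := ⟨ν⟩
  have core : NormedSpace.Core ℝ V :=
    { norm_nonneg := nonneg
      norm_smul := smul
      norm_triangle := add_le
      norm_eq_zero_iff := eq_zero }
  let : NormedAddCommGroup V := NormedAddCommGroup.ofCore core
  let : NormedSpace ℝ V := NormedSpace.ofCore core
  exact ⟨‖LinearMap.toContinuousLinearMap L‖, (LinearMap.toContinuousLinearMap L).le_opNorm⟩

section

variable {n : ℕ} {K : Set (EucSp n)}

theorem IsProperCone.zero_mem (hK : IsProperCone K) : 0 ∈ K := by
  obtain ⟨x, hx⟩ := hK.solid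
  simpa using hK.smul_mem 0 le_rfl x (interior_subset hx)

theorem IsProperCone.add_mem (hK : IsProperCone K) {x y : EucSp n} (hx : x ∈ K) (hy : y ∈ K) :
    x + y ∈ K := by
  have h := hK.smul_mem 2 zero_le_two _
    (hK.convex hx hy one_half_pos.le one_half_pos.le (add_halves 1))
  simpa [smul_smul] using h

theorem LeavesInv.add (hK : IsProperCone K) {A B : Mat n} (hA : LeavesInv A K)
    (hB : LeavesInv B K) : LeavesInv (A + B) K := fun x hx => by
  simpa only [map_add, LinearMap.add_apply] using hK.add_mem (hA x hx) (hB x hx)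

theorem LeavesInv.mul {A B : Mat n} (hA : LeavesInv A K) (hB : LeavesInv B K) :
    LeavesInv (A * B) K := fun x hx => by
  have h := hA _ (hB x hx)
  rwa [← LinearMap.comp_apply, ← Matrix.toLpLin_mul_same] at h

theorem prodRev_succ {k : ℕ} (f : Fin (k + 1) → Mat n) :
    prodRev f = prodRev (fun i => f i.succ) * f 0 := by
  simp [prodRev, List.ofFn_succ]

/-- If `0 ≤ B i ≤ A i` in the cone order for all `i`, then the same holds for the products. -/
theorem LeavesInv.prodRev_and_sub (hK : IsProperCone K) {k : ℕ} {A B : Fin k → Mat n}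
    (hB : ∀ i, LeavesInv (B i) K) (hAB : ∀ i, LeavesInv (A i - B i) K) :
    LeavesInv (prodRev B) K ∧ LeavesInv (prodRev A - prodRev B) K := by
  induction k with
  | zero =>
    refine ⟨fun x hx => ?_, fun x _ => ?_⟩
    · simpa [prodRev] using hx
    · simpa [prodRev] using hK.zero_mem
  | succ k ih =>
    obtain ⟨hP, hD⟩ := ih (fun i => hB i.succ) (fun i => hAB i.succ)
    rw [prodRev_succ A, prodRev_succ B]
    refine ⟨hP.mul (hB 0), ?_⟩
    have hA : LeavesInv (A 0) K := by simpa using (hAB 0).add hK (hB 0)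
    convert (hD.mul hA).add hK (hP.mul (hAB 0)) using 1
    noncomm_ring

theorem le_inducedNormFn_mul {ν : EucSp n → ℝ} (hν : IsNormFn ν) (A : Mat n) (x : EucSp n) :
    ν (Matrix.toEuclideanLin A x) ≤ inducedNormFn ν A * ν x := by
  obtain ⟨nonneg, eq_zero, smul, add_le⟩ := hν
  obtain rfl | hx := eq_or_ne x 0
  · simp [(eq_zero 0).2 rfl]
  have pos : ∀ y, y ≠ 0 → 0 < ν y := fun y hy => (nonneg y).lt_of_ne' (mt (eq_zero y).1 hy)
  obtain ⟨C, hC⟩ :=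
    exists_bound_of_norm_axioms ν nonneg eq_zero smul add_le (Matrix.toEuclideanLin A)
  rw [← div_le_iff₀ (pos x hx)]
  refine le_csSup ⟨C, ?_⟩ ⟨x, hx, rfl⟩
  rintro _ ⟨y, hy, rfl⟩
  exact (div_le_iff₀ (pos y hy)).2 (hC y)

theorem inducedNormFn_nonneg {ν : EucSp n → ℝ} (hν : IsNormFn ν) (A : Mat n) :
    0 ≤ inducedNormFn ν A := by
  refine Real.sSup_nonneg ?_
  rintro _ ⟨x, -, rfl⟩
  exact div_nonneg (hν.1 _) (hν.1 _)

/-- The norm induced by a cone linear absolute norm is monotone on matrices preserving the cone. -/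
theorem inducedNormFn_mono (hK : IsProperCone K) {ν : EucSp n → ℝ} (hν : IsNormFn ν)
    (habs : IsConeAbsolute K ν) (hlin : IsConeLinear K ν) {A B : Mat n}
    (hB : LeavesInv B K) (hAB : LeavesInv (A - B) K) :
    inducedNormFn ν B ≤ inducedNormFn ν A := by
  have hA : LeavesInv A K := by simpa using hAB.add hK hB
  obtain ⟨f, hf, hfν⟩ := hlin
  have mono : ∀ u ∈ K, ν (Matrix.toEuclideanLin B u) ≤ ν (Matrix.toEuclideanLin A u) := by
    intro u hu
    have h := hf _ (hAB u hu)
    rw [map_sub, LinearMap.sub_apply, inner_sub_right] at h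
    rw [hfν _ (hB u hu), hfν _ (hA u hu)]
    linarith
  have bound : ∀ v ∈ K, ∀ w ∈ K,
      ν (Matrix.toEuclideanLin B (v - w)) ≤ inducedNormFn ν A * ν (v + w) := by
    intro v hv w hw
    have hneg : ∀ y, ν (-y) = ν y := fun y => by simpa using hν.2.2.1 (-1) y
    calc ν (Matrix.toEuclideanLin B (v - w))
        ≤ ν (Matrix.toEuclideanLin B v) + ν (Matrix.toEuclideanLin B w) := by
          rw [map_sub, sub_eq_add_neg, ← hneg (Matrix.toEuclideanLin B w)]
          exact hν.2.2.2 _ _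
      _ = ν (Matrix.toEuclideanLin B (v + w)) := by
          rw [hfν _ (hB v hv), hfν _ (hB w hw), hfν _ (hB _ (hK.add_mem hv hw)), map_add,
            inner_add_right]
      _ ≤ ν (Matrix.toEuclideanLin A (v + w)) := mono _ (hK.add_mem hv hw)
      _ ≤ inducedNormFn ν A * ν (v + w) := le_inducedNormFn_mul hν A _
  refine Real.sSup_le ?_ (inducedNormFn_nonneg hν A)
  rintro _ ⟨x, hx, rfl⟩
  have hpos : 0 < ν x := (hν.1 x).lt_of_ne' (mt (hν.2.1 x).1 hx)
  have hne : {r : ℝ | ∃ v ∈ K, ∃ w ∈ K, x = v - w ∧ r = ν (v + w)}.Nonempty := by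
    by_contra h
    rw [habs x, Set.not_nonempty_iff_eq_empty.1 h, Real.sInf_empty] at hpos
    exact lt_irrefl _ hpos
  rw [div_le_iff₀ hpos]
  obtain h0 | h0 := (inducedNormFn_nonneg hν A).eq_or_lt
  · obtain ⟨_, v, hv, w, hw, rfl, -⟩ := hne
    have h := bound v hv w hw
    rwa [← h0, zero_mul] at h ⊢
  · rw [← div_le_iff₀' h0, habs x]
    refine le_csInf hne ?_
    rintro _ ⟨v, hv, w, hw, rfl, rfl⟩
    exact (div_le_iff₀' h0).2 (bound v hv w hw)

end

/-- If `ν` is a cone linear absolute norm w.r.t. a proper cone `K` and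
`A_i ≥^K B_i ≥^K 0` for `i = 1, …, k`, then `‖A_k ⋯ A₁‖ ≥ ‖B_k ⋯ B₁‖` in the induced
matrix norm. -/
theorem stmt12 (n : ℕ) (hn : 1 ≤ n) (K : Set (EucSp n)) (hK : IsProperCone K)
    (ν : EucSp n → ℝ) (hν : IsNormFn ν) (habs : IsConeAbsolute K ν) (hlin : IsConeLinear K ν)
    (k : ℕ) (A B : Fin k → Mat n)
    (hB : ∀ i, LeavesInv (B i) K) (hAB : ∀ i, LeavesInv (A i - B i) K) :
    inducedNormFn ν (prodRev B) ≤ inducedNormFn ν (prodRev A) := by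
  obtain ⟨hP, hD⟩ := LeavesInv.prodRev_and_sub hK hB hAB
  exact inducedNormFn_mono hK hν habs hlin hP hD

end
end
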